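/- arXiv:2503.13757 — 2 statements merged into one kernel-verified Lean document; each statement's English description precedes it below -/
import Mathlib

section
/- Fix d ∈ ℕ, d ≥ 1, and a ∈ (−1,1). For every t_0 > 0, the sequence of functions {𝒢_n}_{n=1}^∞ converges uniformly to 𝒢 on ℝ^{d+1}_+ × [t_0, ∞). -/
/-!
After the scaling `r = |X|² / t`, both kernels carry the same factor `t ^ (-(d+1+a)/2)`, which is
bounded on `t ≥ t₀`; so two things are needed.

* The constants converge, `𝒞_n → 𝒞`. The sphere areas turn `𝒞_n` into a quotient
  `Γ(x + s) / Γ(x)` with `x = d(n-1)/2 → ∞` and `s = (d+1+a)/2`, and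
  `Γ(x + s) ~ Γ(x) x ^ s` (`tendsto_Gamma_ratio`), a consequence of the log-convexity of `Γ`.
* The profiles converge uniformly in `r ≥ 0`, with rate `O(1/n)`. Put `e = (dn-d-2)/2` and
  `u = r / (Mn)`. Since `(1-u) exp u ≥ 1 - u²`, Bernoulli's inequality gives
  `0 ≤ exp (-eu) - (1-u) ^ e ≤ e u² exp (-eu) ≤ 2/e`. Moreover `r/4 - eu = K u` with
  `K = (d+3+a)/2` independent of `n`, so replacing `exp (-eu)` by `exp (-r/4)`
  costs at most `K u exp (-eu) ≤ K/e` (`profile_bound`).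
-/

open MeasureTheory Real Set Filter Topology

noncomputable section

/-- `M = M(d,n,a) = 2d + 2(1+a)/n`. -/
def Mc (d n : ℕ) (a : ℝ) : ℝ := 2 * d + 2 * (1 + a) / n

/-- `γ_a = π^{(1+a)/2} / Γ((1+a)/2)`. -/
def gammaA (a : ℝ) : ℝ := Real.pi ^ ((1 + a) / 2) / Real.Gamma ((1 + a) / 2)

/-- `ω_s = 2 π^{(s+1)/2} / Γ((s+1)/2)`, the "area of the sphere `𝕊^s`". -/
def omegaS (s : ℝ) : ℝ := 2 * Real.pi ^ ((s + 1) / 2) / Real.Gamma ((s + 1) / 2)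

/-- The normalizing constant `𝒞_n`. -/
def Cn (d n : ℕ) (a : ℝ) : ℝ :=
  2 * gammaA a * omegaS ((d : ℝ) * n - d - 1) /
    (omegaS ((d : ℝ) * n + a) * (Mc d n a * n) ^ (((d : ℝ) + 1 + a) / 2))

/-- The normalizing constant `𝒞`. -/
def CC (d : ℕ) (a : ℝ) : ℝ :=
  (4 * Real.pi) ^ (-(d : ℝ) / 2) / (2 ^ a * Real.Gamma ((1 + a) / 2))

/-- The approximating kernel `𝒢_n(X,t)`. -/
def Gn (d n : ℕ) (a : ℝ) (X : EuclideanSpace ℝ (Fin (d + 1))) (t : ℝ) : ℝ :=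
  if ‖X‖ ^ 2 < Mc d n a * n * t then
    Cn d n a * t ^ (-(((d : ℝ) + 1 + a) / 2)) *
      (1 - ‖X‖ ^ 2 / (Mc d n a * n * t)) ^ (((d : ℝ) * n - d - 2) / 2)
  else 0

/-- The weighted Gaussian kernel `𝒢(X,t)`. -/
def GG (d : ℕ) (a : ℝ) (X : EuclideanSpace ℝ (Fin (d + 1))) (t : ℝ) : ℝ :=
  CC d a * t ^ (-(((d : ℝ) + 1 + a) / 2)) * Real.exp (-‖X‖ ^ 2 / (4 * t))

/-! ### Asymptotics of the Gamma function -/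

/-- Log-convexity of `Γ` between `x` and `x + 1`. -/
lemma Gamma_add_le {x s : ℝ} (hx : 0 < x) (hs0 : 0 < s) (hs1 : s < 1) :
    Real.Gamma (x + s) ≤ Real.Gamma x * x ^ s := by
  have hG := Real.Gamma_pos_of_pos hx
  have h := Real.Gamma_mul_add_mul_le_rpow_Gamma_mul_rpow_Gamma hx (by linarith : 0 < x + 1)
    (by linarith : 0 < 1 - s) hs0 (by ring)
  rw [Real.Gamma_add_one hx.ne', Real.mul_rpow hx.le hG.le] at h
  have e1 : (1 - s) * x + s * (x + 1) = x + s := by ring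
  have e2 : Real.Gamma x ^ (1 - s) * (x ^ s * Real.Gamma x ^ s) = Real.Gamma x * x ^ s := by
    have : Real.Gamma x ^ (1 - s) * Real.Gamma x ^ s = Real.Gamma x := by
      rw [← Real.rpow_add hG]; simp
    calc _ = (Real.Gamma x ^ (1 - s) * Real.Gamma x ^ s) * x ^ s := by ring
      _ = _ := by rw [this]
  rwa [e1, e2] at h

lemma tendsto_add_div_self (s : ℝ) : Tendsto (fun x : ℝ => (x + s) / x) atTop (𝓝 1) := by
  have h : Tendsto (fun x : ℝ => 1 + s / x) atTop (𝓝 (1 + 0)) :=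
    tendsto_const_nhds.add (tendsto_id.const_div_atTop s)
  rw [add_zero] at h
  refine h.congr' ?_
  filter_upwards [eventually_gt_atTop 0] with x hx
  field_simp

lemma tendsto_Gamma_ratio_Ioo {s : ℝ} (hs0 : 0 < s) (hs1 : s < 1) :
    Tendsto (fun x : ℝ => Real.Gamma (x + s) / (Real.Gamma x * x ^ s)) atTop (𝓝 1) := by
  have hlow : Tendsto (fun x : ℝ => ((x + s) / x) ^ (-(1 - s))) atTop (𝓝 1) := by
    have := (tendsto_add_div_self s).rpow_const (p := -(1 - s)) (Or.inl one_ne_zero)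
    simpa using this
  refine tendsto_of_tendsto_of_tendsto_of_le_of_le' hlow tendsto_const_nhds ?_ ?_
  · filter_upwards [eventually_gt_atTop 0] with x hx
    have hG := Real.Gamma_pos_of_pos hx
    have hxs : 0 < x + s := by linarith
    -- The upper bound, applied from `x + s` up to `x + 1`, is a lower bound for `Γ (x + s)`.
    have h := Gamma_add_le hxs (by linarith : 0 < 1 - s) (by linarith)
    rw [show x + s + (1 - s) = x + 1 by ring, Real.Gamma_add_one hx.ne'] at h
    rw [le_div_iff₀ (by positivity), Real.rpow_neg (by positivity),
      Real.div_rpow hxs.le hx.le, inv_div, div_mul_eq_mul_div, div_le_iff₀ (by positivity)]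
    have : x ^ (1 - s) * x ^ s = x := by rw [← Real.rpow_add hx]; simp
    calc x ^ (1 - s) * (Real.Gamma x * x ^ s) = (x ^ (1 - s) * x ^ s) * Real.Gamma x := by ring
      _ = x * Real.Gamma x := by rw [this]
      _ ≤ _ := h
  · filter_upwards [eventually_gt_atTop 0] with x hx
    have hG := Real.Gamma_pos_of_pos hx
    rw [div_le_one (by positivity)]
    exact Gamma_add_le hx hs0 hs1

/-- `Γ(x + s) ~ Γ(x) x ^ s` as `x → ∞`: the functional equation extends the case `0 ≤ s < 1`
to all `s ≥ 0`. -/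
lemma tendsto_Gamma_ratio {s : ℝ} (hs : 0 ≤ s) :
    Tendsto (fun x : ℝ => Real.Gamma (x + s) / (Real.Gamma x * x ^ s)) atTop (𝓝 1) := by
  have key : ∀ k : ℕ, ∀ s : ℝ, 0 ≤ s → s < 1 →
      Tendsto (fun x : ℝ => Real.Gamma (x + (s + k)) / (Real.Gamma x * x ^ (s + k))) atTop
        (𝓝 1) := by
    intro k s hs0 hs1
    induction k with
    | zero =>
      rcases hs0.eq_or_lt with rfl | hpos
      · refine tendsto_const_nhds.congr' ?_
        filter_upwards [eventually_gt_atTop 0] with x hx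
        have hG := Real.Gamma_pos_of_pos hx
        simp [hG.ne']
      · simpa using tendsto_Gamma_ratio_Ioo hpos hs1
    | succ k ih =>
      have h := ih.mul (tendsto_add_div_self (s + k))
      rw [mul_one] at h
      refine h.congr' ?_
      filter_upwards [eventually_gt_atTop 0] with x hx
      have hG := Real.Gamma_pos_of_pos hx
      have hy : 0 < x + (s + k) := by positivity
      push_cast
      rw [show x + (s + (k + 1)) = x + (s + k) + 1 by ring,
        show s + ((k : ℝ) + 1) = s + k + 1 by ring, Real.Gamma_add_one hy.ne',
        Real.rpow_add_one hx.ne']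
      have := Real.rpow_pos_of_pos hx (s + k)
      field_simp
  have h := key ⌊s⌋₊ (s - ⌊s⌋₊) (by linarith [Nat.floor_le hs])
    (by linarith [Nat.lt_floor_add_one s])
  simpa using h

/-! ### Convergence of the normalizing constants -/

lemma Mc_mul {d n : ℕ} (a : ℝ) (hn : 1 ≤ n) :
    Mc d n a * n = 2 * d * n + 2 * (1 + a) := by
  have : (n : ℝ) ≠ 0 := by positivity
  unfold Mc
  field_simp

/-- The sphere areas in `𝒞_n` combine into a Gamma quotient at `x = d(n-1)/2`. -/
lemma Cn_eq {d n : ℕ} (hd : 1 ≤ d) {a : ℝ} (ha : a ∈ Set.Ioo (-1 : ℝ) 1) (hn : 2 ≤ n) :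
    Cn d n a = 2 * gammaA a * π ^ (-(((d : ℝ) + 1 + a) / 2)) *
      (Real.Gamma (((d : ℝ) * n - d) / 2 + ((d : ℝ) + 1 + a) / 2) /
        (Real.Gamma (((d : ℝ) * n - d) / 2) *
          (((d : ℝ) * n - d) / 2) ^ (((d : ℝ) + 1 + a) / 2))) *
      ((((d : ℝ) * n - d) / 2) / (Mc d n a * n)) ^ (((d : ℝ) + 1 + a) / 2) := by
  have hd' : (1 : ℝ) ≤ d := by exact_mod_cast hd
  have hn' : (2 : ℝ) ≤ n := by exact_mod_cast hn
  obtain ⟨ha1, ha2⟩ := ha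
  have hM := Mc_mul (d := d) a (by omega : 1 ≤ n)
  have hMpos : 0 < Mc d n a * n := by rw [hM]; nlinarith
  unfold Cn omegaS
  rw [show ((d : ℝ) * n - d - 1 + 1) / 2 = ((d : ℝ) * n - d) / 2 by ring,
    show ((d : ℝ) * n + a + 1) / 2 = ((d : ℝ) * n - d) / 2 + ((d : ℝ) + 1 + a) / 2 by ring]
  have hx : 0 < ((d : ℝ) * n - d) / 2 := by nlinarith
  have hS : 0 < ((d : ℝ) + 1 + a) / 2 := by linarith
  generalize ((d : ℝ) * n - d) / 2 = x at *
  generalize ((d : ℝ) + 1 + a) / 2 = S at *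
  generalize Mc d n a * n = N at *
  rw [Real.div_rpow hx.le hMpos.le, Real.rpow_neg Real.pi_pos.le, Real.rpow_add Real.pi_pos]
  have h1 := Real.Gamma_pos_of_pos hx
  have h2 := Real.Gamma_pos_of_pos (by linarith : 0 < x + S)
  have h3 := Real.rpow_pos_of_pos hx S
  have h4 := Real.rpow_pos_of_pos hMpos S
  have h5 := Real.rpow_pos_of_pos Real.pi_pos S
  have h6 := Real.rpow_pos_of_pos Real.pi_pos x
  field_simp

lemma CC_eq (d : ℕ) {a : ℝ} (ha : a ∈ Set.Ioo (-1 : ℝ) 1) :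
    CC d a = 2 * gammaA a * π ^ (-(((d : ℝ) + 1 + a) / 2)) * 1 *
      (1 / 4 : ℝ) ^ (((d : ℝ) + 1 + a) / 2) := by
  have hG := Real.Gamma_pos_of_pos (by linarith [ha.1] : 0 < (1 + a) / 2)
  have e1 : π ^ (-(((d : ℝ) + 1 + a) / 2)) * π ^ ((1 + a) / 2) = π ^ (-(d : ℝ) / 2) := by
    rw [← Real.rpow_add Real.pi_pos]; ring_nf
  have e2 : 2 * (1 / 4 : ℝ) ^ (((d : ℝ) + 1 + a) / 2) = 4 ^ (-(d : ℝ) / 2) / 2 ^ a := by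
    have h4 : ∀ y : ℝ, (4 : ℝ) ^ y = 2 ^ (2 * y) := fun y => by
      rw [Real.rpow_mul (by norm_num)]; norm_num
    rw [one_div, Real.inv_rpow (by norm_num), ← Real.rpow_neg (by norm_num), h4, h4,
      ← Real.rpow_sub (by norm_num)]
    nth_rewrite 1 [← Real.rpow_one (2 : ℝ)]
    rw [← Real.rpow_add (by norm_num)]
    ring_nf
  unfold CC gammaA
  rw [Real.mul_rpow (by norm_num) Real.pi_pos.le]
  calc _ = (4 ^ (-(d : ℝ) / 2) / 2 ^ a) * π ^ (-(d : ℝ) / 2) / Real.Gamma ((1 + a) / 2) := by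
        field_simp
    _ = _ := by rw [← e1, ← e2]; ring

lemma tendsto_Cn {d : ℕ} (hd : 1 ≤ d) {a : ℝ} (ha : a ∈ Set.Ioo (-1 : ℝ) 1) :
    Tendsto (fun n : ℕ => Cn d n a) atTop (𝓝 (CC d a)) := by
  have hd' : (1 : ℝ) ≤ d := by exact_mod_cast hd
  have hnat : Tendsto (fun n : ℕ => (n : ℝ)) atTop atTop := tendsto_natCast_atTop_atTop
  have hx : Tendsto (fun n : ℕ => ((d : ℝ) * n - d) / 2) atTop atTop := by
    refine Tendsto.atTop_div_const (by norm_num) ?_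
    exact tendsto_atTop_add_const_right _ _ (hnat.const_mul_atTop (by linarith))
  have hS : 0 ≤ ((d : ℝ) + 1 + a) / 2 := by linarith [ha.1]
  have hG := (tendsto_Gamma_ratio hS).comp hx
  have hq : Tendsto (fun n : ℕ => (((d : ℝ) * n - d) / 2) / (Mc d n a * n)) atTop
      (𝓝 (1 / 4)) := by
    have hi : Tendsto (fun n : ℕ => ((n : ℝ))⁻¹) atTop (𝓝 0) := hnat.inv_tendsto_atTop
    have h : Tendsto (fun n : ℕ => (((d : ℝ) - d * (n : ℝ)⁻¹) / 2) /
        (2 * d + 2 * (1 + a) * (n : ℝ)⁻¹)) atTop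
        (𝓝 ((((d : ℝ) - d * 0) / 2) / (2 * d + 2 * (1 + a) * 0))) := by
      refine Tendsto.div ?_ ?_ (by simp; omega)
      · exact (tendsto_const_nhds.sub (hi.const_mul _)).div_const _
      · exact tendsto_const_nhds.add (hi.const_mul _)
    have e : (((d : ℝ) - d * 0) / 2) / (2 * d + 2 * (1 + a) * 0) = 1 / 4 := by
      have : (d : ℝ) ≠ 0 := by linarith
      rw [div_eq_div_iff (by simpa using this) (by norm_num)]
      ring
    rw [e] at h
    refine h.congr' ?_
    filter_upwards [eventually_ge_atTop 1] with n hn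
    have hn0 : (0 : ℝ) < n := by positivity
    have hpos : 0 < 2 * (d : ℝ) * n + 2 * (1 + a) := by
      have := ha.1
      have : 0 < (d : ℝ) * n := by positivity
      linarith
    rw [Mc_mul a hn, show 2 * (d : ℝ) + 2 * (1 + a) * (n : ℝ)⁻¹ =
      (2 * (d : ℝ) * n + 2 * (1 + a)) / n by field_simp]
    field_simp
  rw [CC_eq d ha]
  refine ((hG.const_mul _).mul (hq.rpow_const (Or.inl (by norm_num)))).congr' ?_
  filter_upwards [eventually_ge_atTop 2] with n hn
  rw [Cn_eq hd ha hn]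
  rfl

/-! ### Uniform convergence of the profiles -/

lemma sq_mul_exp_neg_le {x : ℝ} (hx : 0 ≤ x) : x ^ 2 * Real.exp (-x) ≤ 2 := by
  rw [Real.exp_neg, ← div_eq_mul_inv, div_le_iff₀ (Real.exp_pos x)]
  linarith [Real.quadratic_le_exp_of_nonneg hx]

lemma mul_exp_neg_le (x : ℝ) : x * Real.exp (-x) ≤ 1 := by
  rw [Real.exp_neg, ← div_eq_mul_inv, div_le_iff₀ (Real.exp_pos x)]
  linarith [Real.add_one_le_exp x]

/-- The truncated power is within `2 / e` of the exponential with the same exponent. -/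
lemma power_bound {e u : ℝ} (he : 1 ≤ e) (hu : 0 ≤ u) :
    |(if u < 1 then (1 - u) ^ e else 0) - Real.exp (-(e * u))| ≤ 2 / e := by
  have he0 : 0 < e := by linarith
  have hsq := sq_mul_exp_neg_le (mul_nonneg he0.le hu)
  have main : e * u ^ 2 * Real.exp (-(e * u)) ≤ 2 / e := by
    rw [le_div_iff₀ he0]
    linarith [hsq]
  split_ifs with h
  · have h1 : 0 ≤ 1 - u := by linarith
    have hup : (1 - u) ^ e ≤ Real.exp (-(e * u)) := by
      have : 1 - u ≤ Real.exp (-u) := by linarith [Real.add_one_le_exp (-u)]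
      calc (1 - u) ^ e ≤ Real.exp (-u) ^ e := Real.rpow_le_rpow h1 this he0.le
        _ = _ := by rw [← Real.exp_mul]; ring_nf
    have hlow : (1 - e * u ^ 2) * Real.exp (-(e * u)) ≤ (1 - u) ^ e := by
      have hB : 1 + e * (-u ^ 2) ≤ (1 + -u ^ 2) ^ e :=
        one_add_mul_self_le_rpow_one_add (by nlinarith) he
      have hP : (1 + -u ^ 2) ^ e ≤ ((1 - u) * Real.exp u) ^ e := by
        refine Real.rpow_le_rpow (by nlinarith) ?_ he0.le
        nlinarith [Real.add_one_le_exp u]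
      rw [Real.mul_rpow h1 (Real.exp_pos u).le, ← Real.exp_mul] at hP
      have hE : Real.exp (u * e) * Real.exp (-(e * u)) = 1 := by
        rw [← Real.exp_add]; simp [mul_comm]
      calc (1 - e * u ^ 2) * Real.exp (-(e * u))
          ≤ ((1 - u) ^ e * Real.exp (u * e)) * Real.exp (-(e * u)) := by
            refine mul_le_mul_of_nonneg_right ?_ (Real.exp_pos _).le
            linarith
        _ = (1 - u) ^ e * (Real.exp (u * e) * Real.exp (-(e * u))) := by ring
        _ = _ := by rw [hE, mul_one]
    rw [abs_sub_comm, abs_of_nonneg (by linarith)]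
    linarith
  · push Not at h
    rw [zero_sub, abs_neg, abs_of_pos (Real.exp_pos _)]
    refine le_trans ?_ main
    have : 1 ≤ e * u ^ 2 := by nlinarith
    exact le_mul_of_one_le_left (Real.exp_pos _).le this

/-- Increasing the exponential rate from `e` to `e + K` changes the value by at most `K / e`,
uniformly in `u ≥ 0`. -/
lemma profile_bound {e K u : ℝ} (he : 1 ≤ e) (hK : 0 ≤ K) (hu : 0 ≤ u) :
    |(if u < 1 then (1 - u) ^ e else 0) - Real.exp (-((e + K) * u))| ≤ (2 + K) / e := by
  have he0 : 0 < e := by linarith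
  have h1 := power_bound he hu
  have h2 : |Real.exp (-(e * u)) - Real.exp (-((e + K) * u))| ≤ K / e := by
    have hs : Real.exp (-((e + K) * u)) = Real.exp (-(e * u)) * Real.exp (-(K * u)) := by
      rw [← Real.exp_add]; ring_nf
    have hK1 : Real.exp (-(K * u)) ≤ 1 := Real.exp_le_one_iff.2 (by nlinarith)
    have hK2 : 1 - Real.exp (-(K * u)) ≤ K * u := by linarith [Real.add_one_le_exp (-(K * u))]
    have hE := Real.exp_pos (-(e * u))
    rw [hs, show Real.exp (-(e * u)) - Real.exp (-(e * u)) * Real.exp (-(K * u)) =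
      Real.exp (-(e * u)) * (1 - Real.exp (-(K * u))) by ring,
      abs_of_nonneg (mul_nonneg hE.le (by linarith)), le_div_iff₀ he0]
    calc Real.exp (-(e * u)) * (1 - Real.exp (-(K * u))) * e
        ≤ Real.exp (-(e * u)) * (K * u) * e := by gcongr
      _ = K * (e * u * Real.exp (-(e * u))) := by ring
      _ ≤ K * 1 := by gcongr; exact mul_exp_neg_le _
      _ = K := mul_one K
  calc _ ≤ _ := abs_sub_le _ (Real.exp (-(e * u))) _
    _ ≤ 2 / e + K / e := add_le_add h1 h2
    _ = _ := by ring

/-! ### Uniform convergence of the kernels -/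

/-- Quantitative estimate, uniform over all `X` (also outside the half-space) and `t ≥ t₀`. -/
lemma Gn_sub_GG_bound {d n : ℕ} (hd : 1 ≤ d) {a : ℝ} (ha : a ∈ Set.Ioo (-1 : ℝ) 1)
    (hn : 1 ≤ n) (he : 1 ≤ ((d : ℝ) * n - d - 2) / 2) {t₀ t : ℝ} (ht₀ : 0 < t₀) (ht : t₀ ≤ t)
    (X : EuclideanSpace ℝ (Fin (d + 1))) :
    |Gn d n a X t - GG d a X t| ≤ t₀ ^ (-(((d : ℝ) + 1 + a) / 2)) *
      (|Cn d n a| * ((2 + ((d : ℝ) + 3 + a) / 2) / (((d : ℝ) * n - d - 2) / 2)) +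
        |Cn d n a - CC d a|) := by
  obtain ⟨ha1, ha2⟩ := ha
  have htpos : 0 < t := ht₀.trans_le ht
  have hdn : (0 : ℝ) < d * n := by positivity
  have hM := Mc_mul (d := d) a hn
  have hN : 0 < Mc d n a * n := by rw [hM]; linarith
  have hNt : 0 < Mc d n a * n * t := mul_pos hN htpos
  set u : ℝ := ‖X‖ ^ 2 / (Mc d n a * n * t) with hu
  have hu0 : 0 ≤ u := by positivity
  have hlt : ‖X‖ ^ 2 < Mc d n a * n * t ↔ u < 1 := (div_lt_one hNt).symm
  -- This is where `M` enters: the two exponential rates differ by a constant independent of `n`.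
  have hexp : -‖X‖ ^ 2 / (4 * t) =
      -((((d : ℝ) * n - d - 2) / 2 + ((d : ℝ) + 3 + a) / 2) * u) := by
    have : ((d : ℝ) * n - d - 2) / 2 + ((d : ℝ) + 3 + a) / 2 = Mc d n a * n / 4 := by
      rw [hM]; ring
    rw [this, hu]
    generalize Mc d n a * n = N at *
    field_simp
  have hp := profile_bound he (by linarith : 0 ≤ ((d : ℝ) + 3 + a) / 2) hu0
  rw [← hexp] at hp
  set φ : ℝ := if u < 1 then (1 - u) ^ (((d : ℝ) * n - d - 2) / 2) else 0 with hφ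
  have hGn : Gn d n a X t = Cn d n a * t ^ (-(((d : ℝ) + 1 + a) / 2)) * φ := by
    unfold Gn
    rw [hφ, ← hu]
    simp only [hlt]
    split_ifs <;> simp
  have hT : t ^ (-(((d : ℝ) + 1 + a) / 2)) ≤ t₀ ^ (-(((d : ℝ) + 1 + a) / 2)) :=
    Real.rpow_le_rpow_of_nonpos ht₀ ht (by linarith)
  have hT0 : 0 ≤ t ^ (-(((d : ℝ) + 1 + a) / 2)) := by positivity
  have hE : Real.exp (-‖X‖ ^ 2 / (4 * t)) ≤ 1 :=
    Real.exp_le_one_iff.2 (div_nonpos_of_nonpos_of_nonneg (by simp) (by linarith))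
  rw [hGn, GG]
  set E := Real.exp (-‖X‖ ^ 2 / (4 * t)) with hEdef
  have hE0 : 0 ≤ E := (Real.exp_pos _).le
  set T := t ^ (-(((d : ℝ) + 1 + a) / 2))
  have h1 : Cn d n a * T * φ - CC d a * T * E =
      T * (Cn d n a * (φ - E) + (Cn d n a - CC d a) * E) := by ring
  rw [h1, abs_mul, abs_of_nonneg hT0]
  refine mul_le_mul hT ?_ (abs_nonneg _) (hT0.trans hT)
  refine (abs_add_le _ _).trans ?_
  rw [abs_mul, abs_mul, abs_of_nonneg hE0]
  exact add_le_add (mul_le_mul_of_nonneg_left hp (abs_nonneg _))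
    (mul_le_of_le_one_right (abs_nonneg _) hE)

/-- Gaussian approximation (Lemma `GaussianLimit`, uniform convergence part):
for every `t₀ > 0` the sequence `𝒢_n` converges uniformly to `𝒢`
on `ℝ^{d+1}_+ × [t₀, ∞)`. -/
theorem gaussian_uniform_limit (d : ℕ) (hd : 1 ≤ d) (a : ℝ) (ha : a ∈ Set.Ioo (-1 : ℝ) 1)
    (t₀ : ℝ) (ht₀ : 0 < t₀) :
    TendstoUniformlyOn (fun n (q : EuclideanSpace ℝ (Fin (d + 1)) × ℝ) => Gn d n a q.1 q.2)
      (fun q => GG d a q.1 q.2) Filter.atTop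
      ({X : EuclideanSpace ℝ (Fin (d + 1)) | 0 < X 0} ×ˢ Set.Ici t₀) := by
  have hd' : (0 : ℝ) < d := by exact_mod_cast hd
  have hC := tendsto_Cn hd ha
  have he : Tendsto (fun n : ℕ => ((d : ℝ) * n - d - 2) / 2) atTop atTop := by
    refine Tendsto.atTop_div_const (by norm_num) ?_
    refine tendsto_atTop_add_const_right _ _ (tendsto_atTop_add_const_right _ _ ?_)
    exact tendsto_natCast_atTop_atTop.const_mul_atTop hd'
  have hB : Tendsto (fun n : ℕ => t₀ ^ (-(((d : ℝ) + 1 + a) / 2)) *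
      (|Cn d n a| * ((2 + ((d : ℝ) + 3 + a) / 2) / (((d : ℝ) * n - d - 2) / 2)) +
        |Cn d n a - CC d a|)) atTop (𝓝 0) := by
    have h1 := hC.abs.mul (he.const_div_atTop (2 + ((d : ℝ) + 3 + a) / 2))
    have h2 := (hC.sub_const (CC d a)).abs
    have h := (h1.add h2).const_mul (t₀ ^ (-(((d : ℝ) + 1 + a) / 2)))
    simpa using h
  rw [Metric.tendstoUniformlyOn_iff]
  intro ε hε
  filter_upwards [hB.eventually_lt_const hε, he.eventually_ge_atTop 1, eventually_ge_atTop 1]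
    with n hnε hne hn
  rintro ⟨X, t⟩ ⟨-, ht⟩
  rw [dist_comm, Real.dist_eq]
  exact (Gn_sub_GG_bound hd ha hn hne ht₀ ht X).trans_lt hnε
end
end

section
/- Let a ∈ (−1,1), N ∈ ℕ, R > 0, and let V ∈ C¹(𝔹_R^{N+1}) have compact support contained in the open ball 𝔹_R^{N+1} ⊂ ℝ^{N+1}. Then ∫_{𝔹_R} |V(Y)|² |y_0|^a dY ≤ (R² / (N + a + 1)) ∫_{𝔹_R} |∇V(Y)|² |y_0|^a dY. -/
/-!
Weighted Poincaré inequality (Lemma `L:poincare`):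
for `V ∈ C¹_0(𝔹_R^{N+1})`,
`∫_{𝔹_R} |V|² |y_0|^a ≤ (R²/(N+a+1)) ∫_{𝔹_R} |∇V|² |y_0|^a`.
Points of `ℝ^{N+1}` are modeled as `EuclideanSpace ℝ (Fin (N+1))`, with `Y 0` the
distinguished coordinate `y_0`.
-/

/-!
Write `w(Y) = |y₀|^a` and `d = N + 1 + a`. The weight is homogeneous of degree `a`, so for `u ∈ C¹`
with compact support the scaling `Y ↦ tY` gives `∫ u(tY) w(Y) dY = t^(-d) ∫ u w`; differentiating
at `t = 1` yields the divergence-type identity `∫ (d u + ∇u · Y) w = 0` (`integral_euler_identity`).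
This avoids integrating by parts against `w`, which may be singular or vanish on `{y₀ = 0}`.

The identity is applied to `u = V² c` with `c(Y) = 2 / (2R² - |Y|²)`. Since `∇c · Y = c² |Y|²`, one has
`|∇V|² + ∇u · Y = |∇V + c V Y|² ≥ 0`, and `c ≥ 1 / R²` on the support of `V`, whence pointwise
`(d / R²) V² ≤ |∇V|² + d u + ∇u · Y`. Multiplying by `w` and integrating gives the claim. The choice
of `c` is Barta's method: `-c(Y) Y` is the logarithmic gradient of the positive supersolution
`2R² - |Y|²`.
-/

open MeasureTheory Real Set

noncomputable section

/-! ### Integrability of the weight -/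

lemma integrableOn_abs_rpow {a : ℝ} (ha : -1 < a) (r : ℝ) :
    IntegrableOn (fun x : ℝ => |x| ^ a) (Icc (-r) r) := by
  have h1 : IntegrableOn (fun x : ℝ => |x| ^ a) (Ioc 0 r) := by
    rcases le_or_gt 0 r with hr | hr
    · refine IntegrableOn.congr_fun
        ((intervalIntegrable_iff_integrableOn_Ioc_of_le hr).1
          (intervalIntegral.intervalIntegrable_rpow' (a := 0) (b := r) ha)) ?_ measurableSet_Ioc
      intro x hx
      simp only [abs_of_pos hx.1]
    · rw [Ioc_eq_empty_of_le hr.le]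
      exact integrableOn_empty
  have h2 : IntegrableOn (fun x : ℝ => |x| ^ a) (-Ioc 0 r) := by
    simpa only [abs_neg] using h1.comp_neg
  have h3 : IntegrableOn (fun x : ℝ => |x| ^ a) {0} := by
    simp
  refine ((h1.union h2).union h3).mono_set ?_
  intro x hx
  simp only [mem_union, mem_Ioc, Set.mem_neg, mem_singleton_iff]
  rcases lt_trichotomy x 0 with h | h | h
  · exact Or.inl (Or.inr ⟨by linarith, by linarith [hx.1]⟩)
  · exact Or.inr h
  · exact Or.inl (Or.inl ⟨h, hx.2⟩)

lemma integrableOn_weight (N : ℕ) {a : ℝ} (ha : -1 < a) (r : ℝ) :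
    IntegrableOn (fun Y : EuclideanSpace ℝ (Fin (N + 1)) => |Y 0| ^ a)
      (Metric.closedBall 0 r) := by
  -- On the box `[-r, r]^(N+1)` the weight is a product of one-variable integrable functions.
  let f : Fin (N + 1) → ℝ → ℝ := fun i =>
    (Icc (-r) r).indicator (fun x => if i = 0 then |x| ^ a else 1)
  have hf : ∀ i, Integrable (f i) volume := by
    intro i
    refine (integrable_indicator_iff measurableSet_Icc).2 ?_
    by_cases hi : i = 0
    · simpa only [hi, if_true] using integrableOn_abs_rpow ha r
    · simp only [hi, if_false]
      exact integrableOn_const (by simp)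
  have hprod : Integrable (fun x : Fin (N + 1) → ℝ => ∏ i, f i (x i)) volume :=
    Integrable.fintype_prod hf
  have hE := ((EuclideanSpace.volume_preserving_symm_measurableEquiv_toLp
    (Fin (N + 1))).integrable_comp_emb (MeasurableEquiv.measurableEmbedding _)).2 hprod
  refine hE.integrableOn.congr_fun ?_ Metric.isClosed_closedBall.measurableSet
  intro Y hY
  have hmem : ∀ i, Y i ∈ Icc (-r) r := fun i =>
    abs_le.1 ((PiLp.norm_apply_le Y i).trans (mem_closedBall_zero_iff.1 hY))
  change ∏ i, f i (Y i) = |Y 0| ^ a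
  have : ∀ i, f i (Y i) = if i = 0 then |Y 0| ^ a else 1 := by
    intro i
    simp only [f, indicator_of_mem (hmem i)]
    split_ifs with h
    · rw [h]
    · rfl
  simp [this]

lemma locallyIntegrable_weight (N : ℕ) {a : ℝ} (ha : -1 < a) :
    LocallyIntegrable (fun Y : EuclideanSpace ℝ (Fin (N + 1)) => |Y 0| ^ a) volume := by
  refine locallyIntegrable_iff.2 fun k hk => ?_
  obtain ⟨r, hr⟩ := hk.isBounded.subset_closedBall 0
  exact (integrableOn_weight N ha r).mono_set hr

lemma integrable_mul_weight {N : ℕ} {a : ℝ} (ha : -1 < a)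
    {g : EuclideanSpace ℝ (Fin (N + 1)) → ℝ} (hg : Continuous g) (hc : HasCompactSupport g) :
    Integrable (fun Y => g Y * |Y 0| ^ a) volume := by
  simpa only [smul_eq_mul] using
    (locallyIntegrable_weight N ha).integrable_smul_left_of_hasCompactSupport hg hc

/-! ### The scaling identity -/

lemma integral_dilation {N : ℕ} {a : ℝ} (u : EuclideanSpace ℝ (Fin (N + 1)) → ℝ) {t : ℝ}
    (ht : 0 < t) :
    ∫ Y, u (t • Y) * |Y 0| ^ a = t ^ (-((N : ℝ) + a + 1)) * ∫ Y, u Y * |Y 0| ^ a := by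
  have h := Measure.integral_comp_smul (volume : Measure (EuclideanSpace ℝ (Fin (N + 1))))
    (fun Y => u Y * |Y 0| ^ a) t
  have h2 : ∀ Y : EuclideanSpace ℝ (Fin (N + 1)),
      u (t • Y) * |(t • Y) 0| ^ a = t ^ a * (u (t • Y) * |Y 0| ^ a) := by
    intro Y
    rw [PiLp.smul_apply, smul_eq_mul, abs_mul, abs_of_pos ht,
      mul_rpow ht.le (abs_nonneg _)]
    ring
  simp only [h2] at h
  rw [integral_const_mul, finrank_euclideanSpace_fin, smul_eq_mul,
    abs_of_pos (inv_pos.2 (pow_pos ht _))] at h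
  have hta : t ^ a ≠ 0 := (rpow_pos_of_pos ht a).ne'
  have hexp : t ^ (-((N : ℝ) + a + 1)) * t ^ a = (t ^ (N + 1))⁻¹ := by
    rw [← rpow_add ht, ← rpow_natCast, ← rpow_neg ht.le]
    congr 1
    push_cast
    ring
  apply mul_left_cancel₀ hta
  rw [h, ← hexp]
  ring

/-- The weighted divergence theorem for the field `u(Y) Y`, obtained by differentiating
`integral_dilation` in `t` at `t = 1`. -/
lemma integral_euler_identity {N : ℕ} {a : ℝ} (ha : -1 < a)
    {u : EuclideanSpace ℝ (Fin (N + 1)) → ℝ} (hu : ContDiff ℝ 1 u) (hc : HasCompactSupport u) :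
    ∫ Y, fderiv ℝ u Y Y * |Y 0| ^ a = -((N : ℝ) + a + 1) * ∫ Y, u Y * |Y 0| ^ a := by
  have hdc : Continuous (fderiv ℝ u) := hu.continuous_fderiv one_ne_zero
  have hds : HasCompactSupport (fderiv ℝ u) := hc.fderiv ℝ
  obtain ⟨C, hC⟩ := hds.exists_bound_of_continuous hdc
  have hC0 : 0 ≤ C := (norm_nonneg _).trans (hC 0)
  obtain ⟨r, hr⟩ := hds.isCompact.isBounded.subset_closedBall 0
  have hzero : ∀ Y, r < ‖Y‖ → fderiv ℝ u Y = 0 := fun Y hY =>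
    image_eq_zero_of_notMem_tsupport fun h => by
      have := mem_closedBall_zero_iff.1 (hr h)
      linarith
  have hw : Measurable fun Y : EuclideanSpace ℝ (Fin (N + 1)) => |Y 0| ^ a := by
    fun_prop
  have key := hasDerivAt_integral_of_dominated_loc_of_deriv_le (𝕜 := ℝ)
    (μ := (volume : Measure (EuclideanSpace ℝ (Fin (N + 1)))))
    (F := fun t Y => u (t • Y) * |Y 0| ^ a)
    (F' := fun t Y => fderiv ℝ u (t • Y) Y * |Y 0| ^ a) (x₀ := 1)
    (s := Metric.ball 1 (1 / 2))
    -- For `t ≥ 1/2` the integrand vanishes once `‖Y‖ > 2r`.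
    (bound := (Metric.closedBall 0 (2 * r)).indicator fun Y => (C * (2 * r)) * |Y 0| ^ a)
    (Metric.ball_mem_nhds _ (by norm_num))
    (Filter.Eventually.of_forall fun t =>
      ((hu.continuous.comp (continuous_const_smul t)).measurable.mul hw).aestronglyMeasurable)
    (by simpa only [one_smul] using integrable_mul_weight ha hu.continuous hc)
    (by
      have : Continuous fun Y => fderiv ℝ u ((1 : ℝ) • Y) Y :=
        (hdc.comp (continuous_const_smul (1 : ℝ))).clm_apply continuous_id
      exact (this.measurable.mul hw).aestronglyMeasurable)
    (Filter.Eventually.of_forall fun Y t ht => by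
      have ht' : 1 / 2 < t := by
        have := (abs_lt.1 (by simpa [Real.dist_eq] using Metric.mem_ball.1 ht :
          |t - 1| < 2⁻¹)).1
        norm_num at this ⊢
        linarith
      have hwn : 0 ≤ |Y 0| ^ a := rpow_nonneg (abs_nonneg _) _
      by_cases hY : Y ∈ Metric.closedBall (0 : EuclideanSpace ℝ (Fin (N + 1))) (2 * r)
      · rw [indicator_of_mem hY, norm_mul, Real.norm_of_nonneg hwn]
        refine mul_le_mul_of_nonneg_right ?_ hwn
        exact ((fderiv ℝ u (t • Y)).le_opNorm Y).trans
          (mul_le_mul (hC _) (mem_closedBall_zero_iff.1 hY) (norm_nonneg _) hC0)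
      · rw [indicator_of_notMem hY]
        have hY' : 2 * r < ‖Y‖ := by simpa using hY
        have : r < ‖t • Y‖ := by
          rw [norm_smul, Real.norm_of_nonneg (by linarith)]
          nlinarith [norm_nonneg Y]
        simp [hzero _ this])
    ((integrable_indicator_iff Metric.isClosed_closedBall.measurableSet).2
      ((integrableOn_weight N ha (2 * r)).const_mul _))
    (Filter.Eventually.of_forall fun Y t _ => by
      have h1 : HasDerivAt (fun t : ℝ => t • Y) Y t := by
        simpa using (hasDerivAt_id t).smul_const Y
      have h2 := ((hu.differentiable one_ne_zero) (t • Y)).hasFDerivAt.comp_hasDerivAt t h1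
      exact h2.mul_const _)
  have h1 := key.2
  simp only [one_smul] at h1
  have h2 : HasDerivAt (fun t : ℝ => ∫ Y, u (t • Y) * |Y 0| ^ a)
      (-((N : ℝ) + a + 1) * ∫ Y, u Y * |Y 0| ^ a) 1 := by
    have h3 : HasDerivAt (fun t : ℝ => t ^ (-((N : ℝ) + a + 1)) * ∫ Y, u Y * |Y 0| ^ a)
        (-((N : ℝ) + a + 1) * ∫ Y, u Y * |Y 0| ^ a) 1 := by
      have := (Real.hasDerivAt_rpow_const (x := 1) (p := -((N : ℝ) + a + 1))
        (Or.inl one_ne_zero)).mul_const (∫ Y : EuclideanSpace ℝ (Fin (N + 1)), u Y * |Y 0| ^ a)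
      simpa using this
    refine h3.congr_of_eventuallyEq ?_
    filter_upwards [lt_mem_nhds (zero_lt_one' ℝ)] with t ht
    exact integral_dilation u ht
  exact h1.unique h2

/-! ### The auxiliary coefficient and the inequality -/

/-- Barta's auxiliary function `c(Y) = 2 / (2R² - |Y|²)`, so that `-c(Y) Y` is the gradient of
`log (2R² - |Y|²)`. Only its values on the ball of radius `R` matter, where the denominator is at
least `R²`; the junk value at a zero denominator is always multiplied by `V = 0`. -/
def bartaCoeff {N : ℕ} (R : ℝ) (Y : EuclideanSpace ℝ (Fin (N + 1))) : ℝ :=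
  2 / (2 * R ^ 2 - ‖Y‖ ^ 2)

lemma contDiffAt_bartaCoeff {N : ℕ} {R : ℝ} {Y : EuclideanSpace ℝ (Fin (N + 1))}
    (h : 2 * R ^ 2 - ‖Y‖ ^ 2 ≠ 0) : ContDiffAt ℝ 1 (bartaCoeff (N := N) R) Y :=
  contDiffAt_const.div (contDiffAt_const.sub (contDiff_norm_sq ℝ).contDiffAt) h

lemma fderiv_bartaCoeff_self {N : ℕ} {R : ℝ} {Y : EuclideanSpace ℝ (Fin (N + 1))}
    (h : 2 * R ^ 2 - ‖Y‖ ^ 2 ≠ 0) :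
    fderiv ℝ (bartaCoeff (N := N) R) Y Y = bartaCoeff R Y ^ 2 * ‖Y‖ ^ 2 := by
  have h1 : HasFDerivAt (bartaCoeff (N := N) R) _ Y :=
    ((hasDerivAt_inv h).const_mul 2).comp_hasFDerivAt Y
      ((hasStrictFDerivAt_norm_sq Y).hasFDerivAt.const_sub (2 * R ^ 2))
  rw [h1.fderiv]
  simp only [bartaCoeff, smul_apply, neg_apply,
    innerSL_apply_apply, real_inner_self_eq_norm_sq, smul_eq_mul, nsmul_eq_mul]
  field_simp
  norm_num
  ring

theorem weighted_poincare (N : ℕ) (a : ℝ) (ha : a ∈ Set.Ioo (-1 : ℝ) 1) (R : ℝ) (hR : 0 < R)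
    (V : EuclideanSpace ℝ (Fin (N + 1)) → ℝ)
    (hV : ContDiff ℝ 1 V) (hcpt : HasCompactSupport V)
    (hsupp : tsupport V ⊆ Metric.ball (0 : EuclideanSpace ℝ (Fin (N + 1))) R) :
    ∫ Y in Metric.ball (0 : EuclideanSpace ℝ (Fin (N + 1))) R, V Y ^ 2 * |Y 0| ^ a ≤
      R ^ 2 / ((N : ℝ) + a + 1) *
        ∫ Y in Metric.ball (0 : EuclideanSpace ℝ (Fin (N + 1))) R,
          ‖gradient V Y‖ ^ 2 * |Y 0| ^ a := by
  have hnorm : ∀ Y ∈ tsupport V, ‖Y‖ ^ 2 < R ^ 2 := fun Y hY => by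
    have := mem_ball_zero_iff.1 (hsupp hY)
    nlinarith [norm_nonneg Y]
  have hden : ∀ Y ∈ tsupport V, 2 * R ^ 2 - ‖Y‖ ^ 2 ≠ 0 := fun Y hY => by
    have := hnorm Y hY
    nlinarith [sq_nonneg R]
  have hd : 0 < (N : ℝ) + a + 1 := by
    have := ha.1
    have : (0 : ℝ) ≤ N := N.cast_nonneg
    linarith
  set u : EuclideanSpace ℝ (Fin (N + 1)) → ℝ := fun Y => V Y ^ 2 * bartaCoeff R Y with hu_def
  have hsub : tsupport u ⊆ tsupport V :=
    closure_mono fun Y hY hV0 => hY (by simp [hu_def, hV0])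
  have hu : ContDiff ℝ 1 u := by
    refine contDiff_iff_contDiffAt.2 fun Y => ?_
    by_cases hY : Y ∈ tsupport V
    · exact (hV.contDiffAt.pow 2).mul (contDiffAt_bartaCoeff (hden Y hY))
    · exact contDiffAt_const.congr_of_eventuallyEq
        (notMem_tsupport_iff_eventuallyEq.1 fun h => hY (hsub h))
  have huc : HasCompactSupport u := hcpt.of_isClosed_subset (isClosed_tsupport _) hsub
  have hgrad_norm : ∀ Y, ‖gradient V Y‖ = ‖fderiv ℝ V Y‖ := fun Y => by
    simp [gradient]
  have hsupp0 : ∀ Y ∉ tsupport V, V Y = 0 ∧ fderiv ℝ V Y = 0 := fun Y hY =>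
    ⟨image_eq_zero_of_notMem_tsupport hY,
      image_eq_zero_of_notMem_tsupport fun h => hY (tsupport_fderiv_subset ℝ h)⟩
  have hpt : ∀ Y, ((N : ℝ) + a + 1) / R ^ 2 * V Y ^ 2 ≤
      ‖gradient V Y‖ ^ 2 + (((N : ℝ) + a + 1) * u Y + fderiv ℝ u Y Y) := by
    intro Y
    by_cases hY : Y ∈ tsupport V
    · have hpos : 0 < 2 * R ^ 2 - ‖Y‖ ^ 2 := by nlinarith [hnorm Y hY, sq_nonneg R]
      have hfd : fderiv ℝ u Y Y = 2 * V Y * bartaCoeff R Y * inner ℝ (gradient V Y) Y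
          + V Y ^ 2 * (bartaCoeff R Y ^ 2 * ‖Y‖ ^ 2) := by
        have h1 : HasFDerivAt u _ Y :=
          (((hV.differentiable one_ne_zero) Y).hasFDerivAt.pow 2).mul
            ((contDiffAt_bartaCoeff (hden Y hY)).differentiableAt one_ne_zero).hasFDerivAt
        rw [h1.fderiv, inner_gradient_left, ← fderiv_bartaCoeff_self (hden Y hY)]
        simp
        ring
      -- Expanding this square gives `0 ≤ |∇V|² + ∇u · Y`.
      have hsq : 0 ≤ ‖gradient V Y + (bartaCoeff R Y * V Y) • Y‖ ^ 2 := sq_nonneg _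
      rw [norm_add_sq_real, inner_smul_right, norm_smul, mul_pow, Real.norm_eq_abs, sq_abs]
        at hsq
      have hcge : 1 / R ^ 2 ≤ bartaCoeff R Y := by
        rw [bartaCoeff, div_le_div_iff₀ (by positivity) hpos]
        nlinarith [sq_nonneg ‖Y‖]
      have hmain : ((N : ℝ) + a + 1) / R ^ 2 * V Y ^ 2 ≤ ((N : ℝ) + a + 1) * u Y := by
        have := mul_le_mul_of_nonneg_left hcge
          (mul_nonneg hd.le (sq_nonneg (V Y)))
        simp only [hu_def]
        calc _ = ((N : ℝ) + a + 1) * V Y ^ 2 * (1 / R ^ 2) := by ring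
          _ ≤ _ := this
          _ = _ := by ring
      rw [hfd]
      linarith
    · have hu0 : u Y = 0 := by simp [hu_def, (hsupp0 Y hY).1]
      have hdu0 : fderiv ℝ u Y = 0 :=
        image_eq_zero_of_notMem_tsupport fun h => hY (hsub (tsupport_fderiv_subset ℝ h))
      simp [(hsupp0 Y hY).1, hu0, hdu0]
  have hcV : Continuous (fderiv ℝ V) := hV.continuous_fderiv one_ne_zero
  have I1 : Integrable (fun Y => V Y ^ 2 * |Y 0| ^ a) volume :=
    integrable_mul_weight ha.1 (hV.continuous.pow 2)
      (hcpt.comp_left (g := fun x : ℝ => x ^ 2) (by simp))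
  have I2 : Integrable (fun Y => ‖gradient V Y‖ ^ 2 * |Y 0| ^ a) volume := by
    simp only [hgrad_norm]
    exact integrable_mul_weight ha.1 (hcV.norm.pow 2)
      ((hcpt.fderiv ℝ).comp_left (g := fun x => ‖x‖ ^ 2) (by simp))
  have I3 : Integrable (fun Y => u Y * |Y 0| ^ a) volume :=
    integrable_mul_weight ha.1 hu.continuous huc
  have I4 : Integrable (fun Y => fderiv ℝ u Y Y * |Y 0| ^ a) volume := by
    refine integrable_mul_weight ha.1
      ((hu.continuous_fderiv one_ne_zero).clm_apply continuous_id) ?_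
    refine (huc.fderiv ℝ).mono fun Y hY h0 => hY ?_
    simp [h0]
  have hint : ((N : ℝ) + a + 1) / R ^ 2 * ∫ Y, V Y ^ 2 * |Y 0| ^ a ≤
      ∫ Y, ‖gradient V Y‖ ^ 2 * |Y 0| ^ a := by
    have hmono := integral_mono (I1.const_mul (((N : ℝ) + a + 1) / R ^ 2))
      (I2.add ((I3.const_mul ((N : ℝ) + a + 1)).add I4)) (fun Y => by
        have hwn : 0 ≤ |Y 0| ^ a := rpow_nonneg (abs_nonneg _) _
        have := mul_le_mul_of_nonneg_right (hpt Y) hwn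
        simp only [Pi.add_apply]
        linarith)
    rw [integral_const_mul, integral_add' I2 ((I3.const_mul _).add I4),
      integral_add' (I3.const_mul _) I4, integral_const_mul,
      integral_euler_identity ha.1 hu huc] at hmono
    linarith
  have hout : ∀ Y ∉ Metric.ball (0 : EuclideanSpace ℝ (Fin (N + 1))) R, Y ∉ tsupport V :=
    fun Y hY h => hY (hsupp h)
  rw [setIntegral_eq_integral_of_forall_compl_eq_zero fun Y hY => by
      simp [(hsupp0 Y (hout Y hY)).1],
    setIntegral_eq_integral_of_forall_compl_eq_zero fun Y hY => by
      rw [hgrad_norm]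
      simp [(hsupp0 Y (hout Y hY)).2]]
  calc ∫ Y, V Y ^ 2 * |Y 0| ^ a
      = R ^ 2 / ((N : ℝ) + a + 1) *
        (((N : ℝ) + a + 1) / R ^ 2 * ∫ Y, V Y ^ 2 * |Y 0| ^ a) := by
        field_simp
    _ ≤ _ := mul_le_mul_of_nonneg_left hint (by positivity)
end
end
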